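/- For the numerical semigroup H = ⟨6, 7, 10⟩, the kernel of the K-algebra map K[x,y,z] → K[t] sending x ↦ t^6, y ↦ t^7, z ↦ t^{10} equals the ideal (x^4 − y^2 z, y^4 − x^3 z, z^2 − x y^2). -/

import Mathlib

open MvPolynomial

/-!
The kernel of `x ↦ t ^ 6, y ↦ t ^ 7, z ↦ t ^ 10` is spanned by the differences of monomials of equal
weight for the weights `6, 7, 10`. The three relations rewrite every monomial, without changing its
weight, as a power of `x` times one of `1, y, y ^ 2, y ^ 3, z, y * z`. The weights
`0, 7, 14, 21, 10, 17` of these six form the Apéry set of `⟨6, 7, 10⟩` with respect to `6`: they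
are pairwise incongruent modulo `6`, so the weight determines the rewritten monomial.
-/

theorem ker_le_of_basis_sub_mem {R M N ι κ : Type*} [Ring R] [AddCommGroup M] [Module R M]
    [AddCommGroup N] [Module R N] (b : Module.Basis κ R M) {c : ι → N}
    (hc : LinearIndependent R c) {f : M →ₗ[R] N} {g : κ → ι} (hf : ∀ k, f (b k) = c (g k))
    {P : Submodule R M} (hP : ∀ k l, g k = g l → b k - b l ∈ P) : LinearMap.ker f ≤ P := by
  intro u hu
  have hmap : Finsupp.mapDomain g (b.repr u) = 0 := by
    refine linearIndependent_iff.mp hc _ ?_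
    have hcg : c ∘ g = f ∘ b := funext fun k ↦ (hf k).symm
    rw [Finsupp.linearCombination_mapDomain, hcg, ← Finsupp.apply_linearCombination,
      b.linearCombination_repr, LinearMap.mem_ker.mp hu]
  have hfactors : Function.FactorsThrough (P.mkQ ∘ b) g :=
    fun k l h ↦ (Submodule.Quotient.eq P).mpr (hP k l h)
  rw [← Submodule.Quotient.mk_eq_zero, ← Submodule.mkQ_apply, ← b.linearCombination_repr u,
    Finsupp.apply_linearCombination, ← hfactors.extend_comp (0 : ι → M ⧸ P),
    ← Finsupp.linearCombination_mapDomain, hmap, map_zero]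

theorem aeval_X_pow_monomial {R σ : Type*} [CommSemiring R] (w : σ → ℕ) (m : σ →₀ ℕ) :
    aeval (fun i ↦ (Polynomial.X : Polynomial R) ^ w i) (monomial m (1 : R)) =
      Polynomial.X ^ Finsupp.weight w m := by
  simp only [aeval_monomial, map_one, one_mul, ← pow_mul, Finsupp.prod, Finset.prod_pow_eq_pow_sum,
    Finsupp.weight_apply, Finsupp.sum, smul_eq_mul, mul_comm]

theorem linearIndependent_X_pow {R : Type*} [Semiring R] :
    LinearIndependent R fun n : ℕ ↦ (Polynomial.X : Polynomial R) ^ n := by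
  simpa only [Polynomial.coe_basisMonomials, Polynomial.monomial_one_right_eq_X_pow] using
    (Polynomial.basisMonomials R).linearIndependent

theorem ker_aeval_X_pow_eq_span {R σ : Type*} [CommRing R] (w : σ → ℕ) :
    RingHom.ker (aeval (R := R) fun i ↦ (Polynomial.X : Polynomial R) ^ w i) =
      Ideal.span {p | ∃ m n : σ →₀ ℕ, Finsupp.weight w m = Finsupp.weight w n ∧
        monomial m 1 - monomial n 1 = p} := by
  apply le_antisymm
  · exact ker_le_of_basis_sub_mem (basisMonomials σ R) linearIndependent_X_pow
      (f := (aeval fun i ↦ (Polynomial.X : Polynomial R) ^ w i).toLinearMap)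
      (P := (Ideal.span _).restrictScalars R) (g := Finsupp.weight w)
      (aeval_X_pow_monomial w) fun m n h ↦ Ideal.subset_span ⟨m, n, h, rfl⟩
  · rw [Ideal.span_le]
    rintro _ ⟨m, n, h, rfl⟩
    simp only [SetLike.mem_coe, RingHom.mem_ker, map_sub, aeval_X_pow_monomial, h, sub_self]

/-- The exponent pairs `(i, j)` of the monomials `y ^ i * z ^ j` whose weights `7 * i + 10 * j` form
the Apéry set of the semigroup `⟨6, 7, 10⟩` with respect to `6`. -/
def aperyExponents : Finset (ℕ × ℕ) := {(0, 0), (1, 0), (2, 0), (3, 0), (0, 1), (1, 1)}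

theorem injOn_aperyExponents_weight_mod :
    Set.InjOn (fun p : ℕ × ℕ ↦ (7 * p.1 + 10 * p.2) % 6) aperyExponents := by
  intro p hp q hq
  revert p q
  unfold aperyExponents
  decide

section AperyForm

variable {M : Type*} [CommMonoid M] {x y z u v : M} {n : ℕ}

/-- `u` is a power of `x` times an Apéry monomial in `y` and `z`, and this product has weight `n`
when `x`, `y`, `z` are given the weights `6`, `7`, `10`. -/
def HasAperyForm (x y z : M) (n : ℕ) (u : M) : Prop :=
  ∃ k, ∃ p ∈ aperyExponents, n = 6 * k + (7 * p.1 + 10 * p.2) ∧ u = x ^ k * (y ^ p.1 * z ^ p.2)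

namespace HasAperyForm

theorem unique (hu : HasAperyForm x y z n u) (hv : HasAperyForm x y z n v) : u = v := by
  obtain ⟨k, p, hp, rfl, rfl⟩ := hu
  obtain ⟨l, q, hq, hn, rfl⟩ := hv
  obtain rfl : p = q := injOn_aperyExponents_weight_mod hp hq (by grind)
  obtain rfl : k = l := by omega
  rfl

theorem pow_x (x y z : M) (k : ℕ) : HasAperyForm x y z (6 * k) (x ^ k) :=
  ⟨k, (0, 0), by decide, by simp, by simp⟩

theorem pow_x_mul (h : HasAperyForm x y z n u) (k : ℕ) :
    HasAperyForm x y z (6 * k + n) (x ^ k * u) := by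
  obtain ⟨l, p, hp, rfl, rfl⟩ := h
  exact ⟨k + l, p, hp, by ring, by rw [pow_add, mul_assoc]⟩

theorem mul_y (hx : x ^ 4 = y ^ 2 * z) (hy : y ^ 4 = x ^ 3 * z) (h : HasAperyForm x y z n u) :
    HasAperyForm x y z (n + 7) (u * y) := by
  obtain ⟨k, p, hp, rfl, rfl⟩ := h
  rw [mul_assoc, add_assoc]
  apply pow_x_mul
  simp only [aperyExponents, Finset.mem_insert, Finset.mem_singleton] at hp
  rcases hp with rfl | rfl | rfl | rfl | rfl | rfl
  · exact ⟨0, (1, 0), by decide, by simp, by simp⟩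
  · exact ⟨0, (2, 0), by decide, by simp, by simp [pow_two]⟩
  · exact ⟨0, (3, 0), by decide, by simp, by simp [pow_succ]⟩
  · exact ⟨3, (0, 1), by decide, by simp, by simp [← pow_succ, hy]⟩
  · exact ⟨0, (1, 1), by decide, by simp, by simp [mul_comm]⟩
  · exact ⟨4, (0, 0), by decide, by simp, by simp [hx, pow_two, mul_right_comm]⟩

theorem mul_z (hx : x ^ 4 = y ^ 2 * z) (hz : z ^ 2 = x * y ^ 2) (h : HasAperyForm x y z n u) :
    HasAperyForm x y z (n + 10) (u * z) := by
  obtain ⟨k, p, hp, rfl, rfl⟩ := h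
  rw [mul_assoc, add_assoc]
  apply pow_x_mul
  simp only [aperyExponents, Finset.mem_insert, Finset.mem_singleton] at hp
  rcases hp with rfl | rfl | rfl | rfl | rfl | rfl
  · exact ⟨0, (0, 1), by decide, by simp, by simp⟩
  · exact ⟨0, (1, 1), by decide, by simp, by simp⟩
  · exact ⟨4, (0, 0), by decide, by simp, by simp [hx]⟩
  · exact ⟨4, (1, 0), by decide, by simp, by simp [hx, pow_succ, mul_right_comm]⟩
  · exact ⟨1, (2, 0), by decide, by simp, by simp [← pow_two, hz]⟩
  · exact ⟨1, (3, 0), by decide, by simp, by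
      simp [mul_assoc, ← pow_two z, hz, pow_succ' y 2, mul_left_comm y]⟩

theorem pow_mul_pow_mul_pow (hx : x ^ 4 = y ^ 2 * z) (hy : y ^ 4 = x ^ 3 * z)
    (hz : z ^ 2 = x * y ^ 2) (a b c : ℕ) :
    HasAperyForm x y z (6 * a + 7 * b + 10 * c) (x ^ a * y ^ b * z ^ c) := by
  induction c with
  | zero =>
    induction b with
    | zero => simpa using pow_x x y z a
    | succ b ih => simpa [pow_succ, mul_add, add_assoc, mul_assoc] using ih.mul_y hx hy
  | succ c ih => simpa [pow_succ, mul_add, add_assoc, mul_assoc] using ih.mul_z hx hz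

end HasAperyForm

end AperyForm

theorem monomial_fin_three {R : Type*} [CommSemiring R] (m : Fin 3 →₀ ℕ) :
    monomial m (1 : R) = X 0 ^ m 0 * X 1 ^ m 1 * X 2 ^ m 2 := by
  rw [monomial_eq, Finsupp.prod_fintype _ _ fun _ ↦ pow_zero _, Fin.prod_univ_three, C_1, one_mul]

theorem monomial_sub_monomial_mem_of_weight_eq {R : Type*} [CommRing R]
    {I : Ideal (MvPolynomial (Fin 3) R)} (hx : X 0 ^ 4 - X 1 ^ 2 * X 2 ∈ I)
    (hy : X 1 ^ 4 - X 0 ^ 3 * X 2 ∈ I) (hz : X 2 ^ 2 - X 0 * X 1 ^ 2 ∈ I)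
    {m n : Fin 3 →₀ ℕ}
    (h : Finsupp.weight ![6, 7, 10] m = Finsupp.weight ![6, 7, 10] n) :
    monomial m 1 - monomial n 1 ∈ I := by
  let q := Ideal.Quotient.mk I
  rw [← Ideal.Quotient.mk_eq_mk_iff_sub_mem] at hx hy hz ⊢
  simp only [map_mul, map_pow] at hx hy hz
  have hform (l : Fin 3 →₀ ℕ) : HasAperyForm (q (X 0)) (q (X 1)) (q (X 2))
      (Finsupp.weight ![6, 7, 10] l) (q (monomial l 1)) := by
    simpa [monomial_fin_three, Finsupp.weight_eq_sum, Fin.sum_univ_three, mul_comm] using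
      HasAperyForm.pow_mul_pow_mul_pow hx hy hz (l 0) (l 1) (l 2)
  exact (hform m).unique (h ▸ hform n)

theorem stmt_11_general (R : Type*) [CommRing R] :
    RingHom.ker (MvPolynomial.aeval
        (![Polynomial.X ^ 6, Polynomial.X ^ 7, Polynomial.X ^ 10] :
          Fin 3 → Polynomial R)) =
      Ideal.span {(X 0 : MvPolynomial (Fin 3) R) ^ 4 - X 1 ^ 2 * X 2,
        X 1 ^ 4 - X 0 ^ 3 * X 2, X 2 ^ 2 - X 0 * X 1 ^ 2} := by
  apply le_antisymm
  · have hweights : (![Polynomial.X ^ 6, Polynomial.X ^ 7, Polynomial.X ^ 10] :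
        Fin 3 → Polynomial R) = fun i ↦ Polynomial.X ^ (![6, 7, 10] : Fin 3 → ℕ) i := by
      funext i
      fin_cases i <;> rfl
    rw [hweights, ker_aeval_X_pow_eq_span, Ideal.span_le]
    rintro _ ⟨m, n, h, rfl⟩
    exact monomial_sub_monomial_mem_of_weight_eq (Ideal.subset_span (by simp))
      (Ideal.subset_span (by simp)) (Ideal.subset_span (by simp)) h
  · rw [Ideal.span_le]
    rintro p (rfl | rfl | rfl) <;>
      simp only [SetLike.mem_coe, RingHom.mem_ker, map_sub, map_mul, map_pow, aeval_X,
        Matrix.cons_val] <;> ring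

theorem stmt_11 (K : Type*) [Field K] :
    RingHom.ker (MvPolynomial.aeval
        (![Polynomial.X ^ 6, Polynomial.X ^ 7, Polynomial.X ^ 10] :
          Fin 3 → Polynomial K)) =
      Ideal.span {(X 0 : MvPolynomial (Fin 3) K) ^ 4 - X 1 ^ 2 * X 2,
        X 1 ^ 4 - X 0 ^ 3 * X 2, X 2 ^ 2 - X 0 * X 1 ^ 2} :=
  stmt_11_general K
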